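/- arXiv:1202.4803 — 2 statements merged into one kernel-verified Lean document; each statement's English description precedes it below -/
import Mathlib

section
/- Let 𝒜 be a hereditary abelian category and 𝒩 ⊆ 𝒜 a narrow subcategory. Then every object of the wide closure wide(𝒩) is the kernel of a morphism between two objects of 𝒩. -/
/-!
STATEMENT 4: Let 𝒜 be a hereditary abelian category and 𝒩 ⊆ 𝒜 a narrow subcategory.
Then every object of the wide closure wide(𝒩) is the kernel of a morphism between two
objects of 𝒩.
-/

open CategoryTheory CategoryTheory.Limits

universe w v u

variable {𝒜 : Type u} [Category.{v} 𝒜] [Abelian 𝒜]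

/-- A subcategory (given by its set of objects) is replete, i.e. closed under isomorphisms. -/
def Replete (N : Set 𝒜) : Prop := ∀ ⦃X Y : 𝒜⦄, X ∈ N → (X ≅ Y) → Y ∈ N

/-- A subcategory is closed under extensions if for every short exact sequence
`0 → X₁ → X₂ → X₃ → 0` with `X₁` and `X₃` in it, `X₂` is in it. -/
def ClosedUnderExtensions (N : Set 𝒜) : Prop :=
  ∀ S : ShortComplex 𝒜, S.ShortExact → S.X₁ ∈ N → S.X₃ ∈ N → S.X₂ ∈ N

/-- A subcategory is closed under cokernels if the cokernel of any map between its objects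
belongs to it. -/
def ClosedUnderCokernels (N : Set 𝒜) : Prop :=
  ∀ ⦃X Y : 𝒜⦄ (f : X ⟶ Y), X ∈ N → Y ∈ N → cokernel f ∈ N

/-- A subcategory is closed under kernels if the kernel of any map between its objects
belongs to it. -/
def ClosedUnderKernels (N : Set 𝒜) : Prop :=
  ∀ ⦃X Y : 𝒜⦄ (f : X ⟶ Y), X ∈ N → Y ∈ N → kernel f ∈ N

/-- A narrow subcategory: a (replete) full subcategory closed under extensions and cokernels. -/
def IsNarrow (N : Set 𝒜) : Prop :=
  Replete N ∧ ClosedUnderExtensions N ∧ ClosedUnderCokernels N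

/-- A wide subcategory: a (replete) full subcategory closed under kernels, cokernels and
extensions. -/
def IsWide (W : Set 𝒜) : Prop :=
  Replete W ∧ ClosedUnderKernels W ∧ ClosedUnderCokernels W ∧ ClosedUnderExtensions W

/-- The wide closure of a subcategory: the smallest wide subcategory containing it. -/
def wideClosure (N : Set 𝒜) : Set 𝒜 :=
  {X | ∀ W : Set 𝒜, IsWide W → N ⊆ W → X ∈ W}

variable [HasExt.{w} 𝒜]

/-- An abelian category is hereditary if `Ext²(A, B) = 0` for all objects `A`, `B`
(equivalently, it has global dimension at most one). -/
def Hereditary : Prop := ∀ ⦃X Y : 𝒜⦄ (e : Abelian.Ext X Y 2), e = 0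

/-!
The wide closure is contained in the class of kernels of epimorphisms between objects of `𝒩`,
because that class is itself wide. Hereditarity enters through a factorization: an exact sequence
`0 ⟶ K ⟶ X ⟶ Y ⟶ C ⟶ 0` with `Ext²(C, K) = 0` splits up as a monomorphism `X ⟶ E` with cokernel
`C` followed by an epimorphism `E ⟶ Y` with kernel `K`. When `X` and `Y` lie in `𝒩`, so does the
extension `E` of `C` by `X`, so that `K` is the kernel of an epimorphism in `𝒩`.
-/

open Pretriangulated DerivedCategory

section

variable {𝒞 : Type*} [Category* 𝒞] [Abelian 𝒞]

lemma singleFunctor_hom_shift_eq_zero [HasDerivedCategory 𝒞] ⦃X Y : 𝒞⦄ ⦃n : ℤ⦄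
    (φ : (singleFunctor 𝒞 0).obj X ⟶ ((singleFunctor 𝒞 0).obj Y)⟦n⟧) (hn : n < 0) : φ = 0 := by
  have : TStructure.t.IsGE (((singleFunctor 𝒞 0).obj Y)⟦n⟧) (-n) :=
    TStructure.t.isGE_shift _ 0 n (-n)
  exact TStructure.t.zero φ 0 (-n) (by lia)

lemma shortExact_of_singleFunctor_distinguished [HasDerivedCategory 𝒞] {X Y Z : 𝒞}
    {f : X ⟶ Y} {g : Y ⟶ Z}
    {δ : (singleFunctor 𝒞 0).obj Z ⟶ ((singleFunctor 𝒞 0).obj X)⟦(1 : ℤ)⟧}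
    (hT : Triangle.mk ((singleFunctor 𝒞 0).map f) ((singleFunctor 𝒞 0).map g) δ ∈
      distTriang (DerivedCategory 𝒞)) :
    ∃ w : f ≫ g = 0, (ShortComplex.mk f g w).ShortExact := by
  have w : f ≫ g = 0 := (singleFunctor 𝒞 0).map_injective (by
    simpa using! comp_distTriang_mor_zero₁₂ _ hT)
  have hf := Triangulated.AbelianSubcategory.isLimitKernelForkOfDistTriang
    singleFunctor_hom_shift_eq_zero f g δ hT
  have hg := Triangulated.AbelianSubcategory.isColimitCokernelCoforkOfDistTriang
    singleFunctor_hom_shift_eq_zero f g δ hT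
  have : Mono f := mono_of_isLimit_fork hf
  have : Epi g := epi_of_isColimit_cofork hg
  exact ⟨w, .mk (ShortComplex.exact_of_f_is_kernel (ShortComplex.mk f g w) hf)⟩

lemma exists_singleFunctor_distinguished [HasDerivedCategory 𝒞] {X Z : 𝒞}
    (δ : (singleFunctor 𝒞 0).obj Z ⟶ ((singleFunctor 𝒞 0).obj X)⟦(1 : ℤ)⟧) :
    ∃ (Y : 𝒞) (f : X ⟶ Y) (g : Y ⟶ Z),
      Triangle.mk ((singleFunctor 𝒞 0).map f) ((singleFunctor 𝒞 0).map g) δ ∈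
        distTriang (DerivedCategory 𝒞) := by
  obtain ⟨M, α, β, hM⟩ := distinguished_cocone_triangle₂ δ
  have : M.IsLE 0 := TStructure.t.isLE₂ _ hM 0
    (inferInstanceAs (IsLE ((singleFunctor 𝒞 0).obj X) 0))
    (inferInstanceAs (IsLE ((singleFunctor 𝒞 0).obj Z) 0))
  have : M.IsGE 0 := TStructure.t.isGE₂ _ hM 0
    (inferInstanceAs (IsGE ((singleFunctor 𝒞 0).obj X) 0))
    (inferInstanceAs (IsGE ((singleFunctor 𝒞 0).obj Z) 0))
  obtain ⟨Y, ⟨e⟩⟩ := exists_iso_singleFunctor_obj_of_isGE_of_isLE M 0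
  obtain ⟨f, hf⟩ := (singleFunctor 𝒞 0).map_surjective (α ≫ e.hom)
  obtain ⟨g, hg⟩ := (singleFunctor 𝒞 0).map_surjective (e.inv ≫ β)
  have hα : (singleFunctor 𝒞 0).map f ≫ e.inv = 𝟙 _ ≫ α := by simp [hf]
  have hβ : (singleFunctor 𝒞 0).map g ≫ 𝟙 _ = e.inv ≫ β := by simp [hg]
  have hδ : δ ≫ (𝟙 ((singleFunctor 𝒞 0).obj X))⟦(1 : ℤ)⟧' = 𝟙 _ ≫ δ := by simp
  exact ⟨Y, f, g, isomorphic_distinguished _ hM _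
    (Triangle.isoMk _ _ (Iso.refl _) e.symm (Iso.refl _) hα hβ hδ)⟩

lemma exact_comp_of_isPushout {S : ShortComplex 𝒞} (hS : S.Exact) {X P : 𝒞} {a : S.X₂ ⟶ X}
    {u : X ⟶ P} {v : S.X₃ ⟶ P} (sq : IsPushout a S.g u v) :
    (ShortComplex.mk (S.f ≫ a) u (by simp [sq.w])).Exact := by
  rw [ShortComplex.exact_iff_exact_up_to_refinements]
  intro T x hx
  dsimp at x hx
  have hx₀ : biprod.lift x 0 ≫ biprod.desc u v = 0 := by simp [hx]
  obtain ⟨T₁, π₁, _, (y : T₁ ⟶ S.X₂), (hy : π₁ ≫ biprod.lift x 0 = y ≫ biprod.lift a (-S.g))⟩ :=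
    sq.exact_shortComplex.exact_up_to_refinements _ hx₀
  have hya : π₁ ≫ x = y ≫ a := by simpa using hy =≫ biprod.fst
  have hyg : y ≫ S.g = 0 := by simpa using (hy =≫ biprod.snd).symm
  obtain ⟨T₂, π₂, _, z, hz⟩ := hS.exact_up_to_refinements y hyg
  refine ⟨T₂, π₂ ≫ π₁, inferInstance, z, ?_⟩
  calc (π₂ ≫ π₁) ≫ x = π₂ ≫ y ≫ a := by simp [hya]
    _ = z ≫ S.f ≫ a := (reassoc_of% hz) a

lemma shortExact_of_isPushout {S : ShortComplex 𝒞} (hS : S.ShortExact) {X P : 𝒞}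
    {h : S.X₁ ⟶ X} {u : S.X₂ ⟶ P} {v : X ⟶ P} (sq : IsPushout S.f h u v) :
    (ShortComplex.mk v (sq.desc S.g 0 (by simp)) (by simp)).ShortExact := by
  have := hS.mono_f
  have := hS.epi_g
  have : Mono v := MorphismProperty.of_isPushout (P := .monomorphisms 𝒞) sq.flip ‹Mono S.f›
  have : Epi (sq.desc S.g (0 : X ⟶ S.X₃) (by simp)) := epi_of_epi_fac (sq.inl_desc _ _ _)
  refine ShortComplex.ShortExact.mk (ShortComplex.exact_of_g_is_cokernel _
    (CokernelCofork.IsColimit.ofπ' _ _ fun {T} k hk ↦ ?_))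
  have hk' : S.f ≫ u ≫ k = 0 := by rw [sq.w_assoc, hk, comp_zero]
  exact ⟨hS.exact.desc (u ≫ k) hk', sq.hom_ext (by simp) (by simp [hk])⟩

lemma shortExact_of_exact_of_factorization {K X Y C E : 𝒞} {k : K ⟶ X} {f : X ⟶ Y} {q : Y ⟶ C}
    [Epi q] {wk : k ≫ f = 0} {wq : f ≫ q = 0} (hk : (ShortComplex.mk k f wk).Exact)
    (hq : (ShortComplex.mk f q wq).Exact) {j : X ⟶ E} {p : E ⟶ Y} (hjp : j ≫ p = f)
    (hp : (ShortComplex.mk (k ≫ j) p (by simp [hjp, wk])).ShortExact) :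
    (ShortComplex.mk j (p ≫ q) (by simp [reassoc_of% hjp, wq])).ShortExact := by
  have : Mono (k ≫ j) := hp.mono_f
  have : Epi p := hp.epi_g
  have : Mono j := Preadditive.mono_of_cancel_zero _ fun {T} x hx ↦ by
    obtain ⟨T', π, _, y, hy⟩ := hk.exact_up_to_refinements x (by simp [← hjp, reassoc_of% hx])
    dsimp at y hy
    have hy₀ : y = 0 := by
      rw [← cancel_mono (k ≫ j), ← reassoc_of% hy, hx, comp_zero, zero_comp]
    rw [← cancel_epi π, hy, hy₀, zero_comp, comp_zero]
  refine ShortComplex.ShortExact.mk ?_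
  rw [ShortComplex.exact_iff_exact_up_to_refinements]
  intro T e he
  dsimp at e he
  obtain ⟨T₁, π₁, _, x, hx⟩ := hq.exact_up_to_refinements (e ≫ p) (by simpa using he)
  dsimp at x hx
  obtain ⟨T₂, π₂, _, y, hy⟩ := hp.exact.exact_up_to_refinements (π₁ ≫ e - x ≫ j) (by
    simp [hjp, hx])
  dsimp at y hy
  refine ⟨T₂, π₂ ≫ π₁, inferInstance, π₂ ≫ x + y ≫ k, ?_⟩
  rw [Preadditive.comp_sub, sub_eq_iff_eq_add] at hy
  simp [hy, add_comm]

end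

section

variable {S₁ S₂ : ShortComplex 𝒜}

/- The class of a short exact sequence is the third morphism of its triangle in the derived
category, so the equation of classes completes to a morphism of triangles. -/
lemma exists_hom_of_extClass_comp_eq (h₁ : S₁.ShortExact) (h₂ : S₂.ShortExact)
    (φ₁ : S₁.X₁ ⟶ S₂.X₁) (φ₃ : S₁.X₃ ⟶ S₂.X₃)
    (h : h₁.extClass.comp (Abelian.Ext.mk₀ φ₁) (add_zero 1) =
      (Abelian.Ext.mk₀ φ₃).comp h₂.extClass (zero_add 1)) :
    ∃ φ : S₁ ⟶ S₂, φ.τ₁ = φ₁ ∧ φ.τ₃ = φ₃ := by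
  let _ : HasDerivedCategory 𝒜 := HasDerivedCategory.standard 𝒜
  have comm : h₁.singleδ ≫ ((singleFunctor 𝒜 0).map φ₁)⟦(1 : ℤ)⟧' =
      (singleFunctor 𝒜 0).map φ₃ ≫ h₂.singleδ := by
    simpa [ShiftedHom.comp_mk₀, ShiftedHom.mk₀_comp] using! congrArg Abelian.Ext.hom h
  obtain ⟨φ₂, hφ₁, hφ₃⟩ := complete_distinguished_triangle_morphism₂ _ _
    h₁.singleTriangle_distinguished h₂.singleTriangle_distinguished _ _ comm
  obtain ⟨φ₂, rfl⟩ := (singleFunctor 𝒜 0).map_surjective φ₂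
  exact ⟨{  τ₁ := φ₁
            τ₂ := φ₂
            τ₃ := φ₃
            comm₁₂ := (singleFunctor 𝒜 0).map_injective (by simpa using! hφ₁.symm)
            comm₂₃ := (singleFunctor 𝒜 0).map_injective (by simpa using! hφ₃.symm) }, rfl, rfl⟩

lemma exists_shortExact_extClass_eq {X Z : 𝒜} (x : Abelian.Ext.{w} Z X 1) :
    ∃ (Y : 𝒜) (f : X ⟶ Y) (g : Y ⟶ Z) (w : f ≫ g = 0) (hS : (ShortComplex.mk f g w).ShortExact),
      hS.extClass = x := by
  let _ : HasDerivedCategory 𝒜 := HasDerivedCategory.standard 𝒜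
  obtain ⟨Y, f, g, hT⟩ := exists_singleFunctor_distinguished x.hom
  obtain ⟨w, hS⟩ := shortExact_of_singleFunctor_distinguished hT
  refine ⟨Y, f, g, w, hS, ?_⟩
  obtain ⟨ψ, hgψ, hδψ⟩ : ∃ ψ : (singleFunctor 𝒜 0).obj Z ⟶ (singleFunctor 𝒜 0).obj Z,
      (singleFunctor 𝒜 0).map g ≫ ψ = 𝟙 _ ≫ (singleFunctor 𝒜 0).map g ∧
        hS.singleδ ≫ (𝟙 ((singleFunctor 𝒜 0).obj X))⟦(1 : ℤ)⟧' = ψ ≫ x.hom :=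
    complete_distinguished_triangle_morphism _ _ hS.singleTriangle_distinguished hT (𝟙 _) (𝟙 _)
      ((Category.comp_id _).trans (Category.id_comp _).symm)
  obtain ⟨ψ, rfl⟩ := (singleFunctor 𝒜 0).map_surjective ψ
  have : Epi g := hS.epi_g
  have hψ : ψ = 𝟙 Z := by
    rw [← cancel_epi g]
    exact (singleFunctor 𝒜 0).map_injective (by simpa using hgψ)
  have hδ : hS.singleδ = x.hom := by simpa [hψ] using hδψ
  exact Abelian.Ext.ext (hS.extClass_hom.trans hδ)

lemma exists_mono_epi_factorization {K X Y C : 𝒜} {k : K ⟶ X} {f : X ⟶ Y} {q : Y ⟶ C}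
    [Mono k] [Epi q] {wk : k ≫ f = 0} {wq : f ≫ q = 0} (hk : (ShortComplex.mk k f wk).Exact)
    (hq : (ShortComplex.mk f q wq).Exact) (hExt : ∀ e : Abelian.Ext.{w} C K 2, e = 0) :
    ∃ (E : 𝒜) (j : X ⟶ E) (p : E ⟶ Y) (hjp : j ≫ p = f),
      (ShortComplex.mk (k ≫ j) p (by simp [hjp, wk])).ShortExact ∧
      (ShortComplex.mk j (p ≫ q) (by simp [reassoc_of% hjp, wq])).ShortExact := by
  have hS : (ShortComplex.mk k (Abelian.factorThruImage f) (by
      simpa [← cancel_mono (Abelian.image.ι f)])).ShortExact :=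
    .mk (ShortComplex.exact_of_f_is_kernel _
      (isKernelOfComp (Abelian.image.ι f) f hk.fIsKernel _ (by simp)))
  have hT : (ShortComplex.mk (Abelian.image.ι f) q (by
      simpa [← cancel_epi (Abelian.factorThruImage f)])).ShortExact :=
    .mk (ShortComplex.exact_of_g_is_cokernel _
      (isCokernelOfComp (Abelian.factorThruImage f) f hq.gIsCokernel _ (by simp)))
  obtain ⟨x, hx⟩ := Abelian.Ext.contravariant_sequence_exact₁ hT K hS.extClass rfl (hExt _)
  obtain ⟨E, i, p, _, hE, rfl⟩ := exists_shortExact_extClass_eq (Z := Y) x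
  obtain ⟨φ, hφ₁, hφ₃⟩ := exists_hom_of_extClass_comp_eq hS hE (𝟙 K) (Abelian.image.ι f)
    (by simpa using! hx.symm)
  obtain ⟨j, rfl, hf⟩ : ∃ j : X ⟶ E, k ≫ j = i ∧ j ≫ p = f :=
    ⟨φ.τ₂, by simpa [hφ₁] using φ.comm₁₂.symm, by simpa [hφ₃] using φ.comm₂₃⟩
  exact ⟨E, j, p, hf, hE, shortExact_of_exact_of_factorization hk hq hf hE⟩

end

/-- The objects of an abelian category which are kernels of epimorphisms between objects of `N`,
encoded by short exact sequences. For a narrow subcategory `N` of a hereditary category this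
is a wide subcategory containing `N`. -/
def epiKernels {𝒞 : Type*} [Category* 𝒞] [Abelian 𝒞] (N : Set 𝒞) : Set 𝒞 :=
  {W | ∃ X ∈ N, ∃ Y ∈ N, ∃ (a : W ⟶ X) (b : X ⟶ Y) (w : a ≫ b = 0),
    (ShortComplex.mk a b w).ShortExact}

section

variable {𝒞 : Type*} [Category* 𝒞] [Abelian 𝒞] {N : Set 𝒞}

lemma replete_epiKernels : Replete (epiKernels N) := by
  rintro V W ⟨X, hX, Y, hY, a, b, w, hS⟩ e
  exact ⟨X, hX, Y, hY, e.inv ≫ a, b, by simp [w],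
    ShortComplex.shortExact_of_iso (S₁ := ShortComplex.mk a b w)
      (ShortComplex.isoMk e (Iso.refl X) (Iso.refl Y) (by simp) (by simp)) hS⟩

lemma ClosedUnderCokernels.subset_epiKernels (hN : ClosedUnderCokernels N) :
    N ⊆ epiKernels N := fun X hX ↦
  ⟨X, hX, _, hN (𝟙 X) hX hX, 𝟙 X, cokernel.π (𝟙 X), cokernel.condition _,
    .mk (ShortComplex.exact_cokernel (𝟙 X))⟩

lemma ClosedUnderExtensions.mem_epiKernels_of_shortExact (hN : ClosedUnderExtensions N)
    {S : ShortComplex 𝒞} (hS : S.ShortExact) (h₂ : S.X₂ ∈ epiKernels N) (h₃ : S.X₃ ∈ N) :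
    S.X₁ ∈ epiKernels N := by
  obtain ⟨X, hX, Y, hY, a, b, w, hT⟩ := h₂
  have := hS.mono_f
  have := hS.epi_g
  have : Mono a := hT.mono_f
  have sq := IsPushout.of_hasPushout a S.g
  exact ⟨X, hX, _, hN _ (shortExact_of_isPushout hT sq) h₃ hY, S.f ≫ a, pushout.inl a S.g, _,
    .mk (exact_comp_of_isPushout hS.exact sq)⟩

lemma ClosedUnderExtensions.exists_kernel_iso_and_cokernel_iso (hN : ClosedUnderExtensions N)
    {V X : 𝒞} (hV : V ∈ epiKernels N) (hX : X ∈ N) (h : V ⟶ X) :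
    ∃ Z ∈ N, ∃ P ∈ N, ∃ h' : Z ⟶ P,
      Nonempty (kernel h ≅ kernel h') ∧ Nonempty (cokernel h ≅ cokernel h') := by
  obtain ⟨Z, hZ, Y, hY, a, b, w, hS⟩ := hV
  have : Mono a := hS.mono_f
  have sq := IsPushout.of_hasPushout a h
  have hker := exact_comp_of_isPushout (ShortComplex.exact_kernel h) sq
  have := isIso_cokernel_map_of_isPushout sq.flip
  exact ⟨Z, hZ, _, hN _ (shortExact_of_isPushout hS sq) hX hY, pushout.inl a h,
    ⟨hker.fIsKernel.conePointUniqueUpToIso (limit.isLimit _)⟩,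
    ⟨asIso (cokernel.map _ _ _ _ sq.flip.w)⟩⟩

lemma IsNarrow.cokernel_mem_of_mem_epiKernels (hN : IsNarrow N) {V X : 𝒞}
    (hV : V ∈ epiKernels N) (hX : X ∈ N) (h : V ⟶ X) : cokernel h ∈ N := by
  obtain ⟨Z, hZ, P, hP, h', -, ⟨e⟩⟩ := hN.2.1.exists_kernel_iso_and_cokernel_iso hV hX h
  exact hN.1 (hN.2.2 h' hZ hP) e.symm

lemma IsNarrow.closedUnderCokernels_epiKernels (hN : IsNarrow N) :
    ClosedUnderCokernels (epiKernels N) := by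
  rintro V W f hV ⟨X, hX, Y, hY, a, b, w, hS⟩
  have sq := IsPushout.of_hasPushout a (cokernel.π f)
  have hcoker := exact_comp_of_isPushout (ShortComplex.exact_cokernel f) sq
  have hP : pushout a (cokernel.π f) ∈ N :=
    hN.1 (hN.cokernel_mem_of_mem_epiKernels hV hX (f ≫ a))
      ((cokernelIsCokernel _).coconePointUniqueUpToIso hcoker.gIsCokernel)
  exact ⟨_, hP, Y, hY, _, _, _, shortExact_of_isPushout hS sq⟩

end

section

variable {N : Set 𝒜}

lemma Hereditary.kernel_mem_epiKernels (hher : Hereditary.{w} (𝒜 := 𝒜))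
    (hext : ClosedUnderExtensions N) (hcoker : ClosedUnderCokernels N) {X Y : 𝒜} (f : X ⟶ Y)
    (hX : X ∈ N) (hY : Y ∈ N) : kernel f ∈ epiKernels N := by
  obtain ⟨E, j, p, _, hp, hj⟩ := exists_mono_epi_factorization (ShortComplex.exact_kernel f)
    (ShortComplex.exact_cokernel f) (hher ·)
  exact ⟨E, hext _ hj hX (hcoker f hX hY), Y, hY, _, p, _, hp⟩

lemma Hereditary.closedUnderKernels_epiKernels (hher : Hereditary.{w} (𝒜 := 𝒜))
    (hext : ClosedUnderExtensions N) (hcoker : ClosedUnderCokernels N) :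
    ClosedUnderKernels (epiKernels N) := by
  rintro V W f hV ⟨X, hX, Y, _, a, b, w, hS⟩
  have : Mono a := hS.mono_f
  obtain ⟨Z, hZ, P, hP, h, ⟨e⟩, -⟩ := hext.exists_kernel_iso_and_cokernel_iso hV hX (f ≫ a)
  exact replete_epiKernels (hher.kernel_mem_epiKernels hext hcoker h hZ hP)
    (e.symm ≪≫ kernelCompMono f a)

lemma Hereditary.mem_epiKernels_of_extension (hher : Hereditary.{w} (𝒜 := 𝒜))
    (hext : ClosedUnderExtensions N) {S : ShortComplex 𝒜} (hS : S.ShortExact) (h₁ : S.X₁ ∈ N)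
    (h₃ : S.X₃ ∈ epiKernels N) : S.X₂ ∈ epiKernels N := by
  obtain ⟨X, hX, Y, hY, a, b, w, hT⟩ := h₃
  have := hS.mono_f
  have := hS.epi_g
  have : Mono a := hT.mono_f
  have : Epi b := hT.epi_g
  have hk : (ShortComplex.mk S.f (S.g ≫ a) (by simp)).Exact :=
    ShortComplex.exact_of_f_is_kernel _ (isKernelCompMono hS.fIsKernel a rfl)
  have hq : (ShortComplex.mk (S.g ≫ a) b (by simp [w])).Exact :=
    ShortComplex.exact_of_g_is_cokernel _ (isCokernelEpiComp hT.gIsCokernel S.g rfl)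
  obtain ⟨E, j, p, _, hp, hj⟩ := exists_mono_epi_factorization hk hq (hher ·)
  exact ⟨E, hext _ hp h₁ hX, Y, hY, j, _, _, hj⟩

lemma Hereditary.closedUnderExtensions_epiKernels (hher : Hereditary.{w} (𝒜 := 𝒜))
    (hext : ClosedUnderExtensions N) : ClosedUnderExtensions (epiKernels N) := by
  rintro S hS ⟨X, hX, Y, hY, a, b, w, hT⟩ h₃
  have sq := IsPushout.of_hasPushout S.f a
  have hP : pushout S.f a ∈ epiKernels N :=
    hher.mem_epiKernels_of_extension hext (shortExact_of_isPushout hS sq) hX h₃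
  exact hext.mem_epiKernels_of_shortExact (shortExact_of_isPushout hT sq.flip) hP hY

lemma IsNarrow.isWide_epiKernels (hN : IsNarrow N) (hher : Hereditary.{w} (𝒜 := 𝒜)) :
    IsWide (epiKernels N) :=
  ⟨replete_epiKernels, hher.closedUnderKernels_epiKernels hN.2.1 hN.2.2,
    hN.closedUnderCokernels_epiKernels, hher.closedUnderExtensions_epiKernels hN.2.1⟩

end

theorem wideClosure_objects_are_kernels
    (hher : Hereditary (𝒜 := 𝒜)) (𝒩 : Set 𝒜) (h𝒩 : IsNarrow 𝒩)
    (W : 𝒜) (hW : W ∈ wideClosure 𝒩) :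
    ∃ X ∈ 𝒩, ∃ Y ∈ 𝒩, ∃ f : X ⟶ Y, Nonempty (W ≅ kernel f) := by
  obtain ⟨X, hX, Y, hY, a, b, w, hS⟩ :=
    hW _ (h𝒩.isWide_epiKernels hher) h𝒩.2.2.subset_epiKernels
  exact ⟨X, hX, Y, hY, b, ⟨hS.fIsKernel.conePointUniqueUpToIso (limit.isLimit _)⟩⟩
end

section
/- Let 𝒜 be a hereditary abelian category and (𝒩(k))_{k∈ℤ} a narrow sequence in 𝒜. Then for every k, the wide closure wide(𝒩(k)) is contained in 𝒩(k+1). -/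
/-!
STATEMENT 9: Let 𝒜 be a hereditary abelian category and (𝒩(k))_{k∈ℤ} a narrow sequence
in 𝒜.  Then for every k, the wide closure wide(𝒩(k)) is contained in 𝒩(k+1).
-/

open CategoryTheory CategoryTheory.Limits

universe w v u

variable {𝒜 : Type u} [Category.{v} 𝒜] [Abelian 𝒜]

/-- A narrow sequence in an abelian category 𝒜: a sequence of (replete) narrow subcategories,
each containing the zero objects, which is nondecreasing and satisfies the gluing condition
on five-term exact sequences. -/
structure NarrowSequence (𝒜 : Type u) [Category.{v} 𝒜] [Abelian 𝒜] where
  /-- the underlying sequence of subcategories -/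
  N : ℤ → Set 𝒜
  zero_mem : ∀ (k : ℤ) (Z : 𝒜), IsZero Z → Z ∈ N k
  replete : ∀ k : ℤ, Replete (N k)
  ext_closed : ∀ k : ℤ, ClosedUnderExtensions (N k)
  coker_closed : ∀ k : ℤ, ClosedUnderCokernels (N k)
  incr : ∀ k : ℤ, N k ⊆ N (k + 1)
  glue : ∀ (k : ℤ) ⦃A B C D E : 𝒜⦄ (f : A ⟶ B) (g : B ⟶ C) (h : C ⟶ D) (i : D ⟶ E)
    (w₁ : f ≫ g = 0) (w₂ : g ≫ h = 0) (w₃ : h ≫ i = 0),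
    (ShortComplex.mk f g w₁).Exact → (ShortComplex.mk g h w₂).Exact →
    (ShortComplex.mk h i w₃).Exact →
    A ∈ N (k + 1) → B ∈ N k → D ∈ N k → E ∈ N (k - 1) → C ∈ N k

variable [HasExt.{w} 𝒜]

/-!
The kernels of epimorphisms between objects of a narrow subcategory `N` lie in the next term of a
narrow sequence, by the gluing condition applied to `0 ⟶ 0 ⟶ K ⟶ X ⟶ Y`. In a hereditary category
they moreover form a wide subcategory. Indeed `Ext¹` is then right exact in both variables, so that
extensions lift along epimorphisms of the subobject and extend along monomorphisms of the quotient.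
Lifting the extension `0 ⟶ im f ⟶ Y ⟶ coker f ⟶ 0` along `X ⟶ im f` shows that `N` is closed under
images, so all kernels of maps in `N` are kernels of epimorphisms in `N`. Finally, a map `f : K ⟶ L`
between such kernels has the same kernel and cokernel as its pushout along an embedding of `K` into
an object of `N`.
-/

section ExtensionClasses

open Pretriangulated DerivedCategory Abelian

variable {C : Type u} [Category.{v} C] [Abelian C]

section HasDerivedCategory

variable [HasDerivedCategory C] {S : ShortComplex C}
  {δ : (singleFunctor C 0).obj S.X₃ ⟶ ((singleFunctor C 0).obj S.X₁)⟦(1 : ℤ)⟧}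

lemma shortExact_of_distinguished
    (hδ : Triangle.mk ((singleFunctor C 0).map S.f) ((singleFunctor C 0).map S.g) δ ∈
      distTriang (DerivedCategory C)) : S.ShortExact := by
  let F := singleFunctor C 0 ⋙ homologyFunctor C 0
  have hF : (S.map F).ShortExact :=
    { exact := HomologySequence.exact₂ _ hδ 0
      mono_f := (HomologySequence.mono_homologyMap_mor₁_iff _ hδ (-1) 0).2
        ((isZero_of_isGE ((singleFunctor C 0).obj S.X₃) 0 (-1) (by lia)).eq_of_src _ _)
      epi_g := (HomologySequence.epi_homologyMap_mor₂_iff _ hδ 0 1).2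
        ((isZero_of_isLE ((singleFunctor C 0).obj S.X₁) 0 1 (by lia)).eq_of_tgt _ _) }
  exact ShortComplex.shortExact_of_iso (S.mapNatIso (singleFunctorCompHomologyFunctorIso C 0)) hF

/-- A morphism of triangles extending the identities of the first two terms is also the identity
on the third one, because `S.g` is an epimorphism. -/
lemma singleδ_eq_of_distinguished (hS : S.ShortExact)
    (hδ : Triangle.mk ((singleFunctor C 0).map S.f) ((singleFunctor C 0).map S.g) δ ∈
      distTriang (DerivedCategory C)) : hS.singleδ = δ := by
  let L := singleFunctor C 0
  obtain ⟨c, hc₂, hc₃⟩ := complete_distinguished_triangle_morphism _ _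
    hS.singleTriangle_distinguished hδ (𝟙 (L.obj S.X₁)) (𝟙 (L.obj S.X₂))
    ((Category.comp_id (L.map S.f)).trans (Category.id_comp (L.map S.f)).symm)
  obtain ⟨c, rfl⟩ := L.map_surjective c
  have hc : c = 𝟙 S.X₃ := by
    have := hS.epi_g
    rw [← cancel_epi S.g, Category.comp_id]
    exact L.map_injective (((L.map_comp S.g c).trans hc₂).trans (Category.id_comp (L.map S.g)))
  subst hc
  calc hS.singleδ = hS.singleδ ≫ (𝟙 (L.obj S.X₁))⟦(1 : ℤ)⟧' := by
        rw [CategoryTheory.Functor.map_id]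
        exact (Category.comp_id _).symm
    _ = L.map (𝟙 S.X₃) ≫ δ := hc₃
    _ = δ := by
        rw [L.map_id]
        exact Category.id_comp δ

end HasDerivedCategory

variable [HasExt.{w} C]

lemma exists_shortExact_extClass_eq_s9 {X Z : C} (e : Ext Z X 1) :
    ∃ (E : C) (i : X ⟶ E) (p : E ⟶ Z) (w : i ≫ p = 0)
      (h : (ShortComplex.mk i p w).ShortExact), h.extClass = e := by
  let := HasDerivedCategory.standard C
  let L := singleFunctor C 0
  obtain ⟨T, f, g, hT⟩ := distinguished_cocone_triangle₂ (Z := L.obj Z) (X := L.obj X) e.hom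
  have : T.IsLE 0 := TStructure.t.isLE₂ _ hT 0
    (inferInstanceAs ((L.obj X).IsLE 0)) (inferInstanceAs ((L.obj Z).IsLE 0))
  have : T.IsGE 0 := TStructure.t.isGE₂ _ hT 0
    (inferInstanceAs ((L.obj X).IsGE 0)) (inferInstanceAs ((L.obj Z).IsGE 0))
  obtain ⟨E, ⟨α⟩⟩ := exists_iso_singleFunctor_obj_of_isGE_of_isLE T 0
  obtain ⟨i, hi⟩ := L.map_surjective (f ≫ α.hom)
  obtain ⟨p, hp⟩ := L.map_surjective (α.inv ≫ g)
  have hf : L.map i ≫ α.inv = 𝟙 (L.obj X) ≫ f := by simp [hi]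
  have hg : L.map p ≫ 𝟙 (L.obj Z) = α.inv ≫ g := by simp [hp]
  have he : e.hom ≫ (𝟙 (L.obj X))⟦(1 : ℤ)⟧' = 𝟙 (L.obj Z) ≫ e.hom := by
    rw [CategoryTheory.Functor.map_id, Category.id_comp]
    exact Category.comp_id _
  have hT' : Triangle.mk (L.map i) (L.map p) e.hom ∈ distTriang (DerivedCategory C) :=
    isomorphic_distinguished _ hT _
      (Triangle.isoMk _ _ (Iso.refl _) α.symm (Iso.refl _) hf hg he)
  have w : i ≫ p = 0 := L.map_injective (by simpa using! comp_distTriang_mor_zero₁₂ _ hT')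
  have h : (ShortComplex.mk i p w).ShortExact := shortExact_of_distinguished hT'
  refine ⟨E, i, p, w, h, Ext.ext ?_⟩
  rw [h.extClass_hom]
  exact singleδ_eq_of_distinguished h hT'

lemma exists_hom_of_extClass_comp_eq_s9 {S T : ShortComplex C} (hS : S.ShortExact)
    (hT : T.ShortExact) (a : S.X₁ ⟶ T.X₁) (c : S.X₃ ⟶ T.X₃)
    (h : hS.extClass.comp (Ext.mk₀ a) (add_zero 1) =
      (Ext.mk₀ c).comp hT.extClass (zero_add 1)) :
    ∃ φ : S ⟶ T, φ.τ₁ = a ∧ φ.τ₃ = c := by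
  let := HasDerivedCategory.standard C
  have h' := congrArg Ext.hom h
  simp only [Ext.comp_hom, Ext.mk₀_hom, ShortComplex.ShortExact.extClass_hom,
    ShiftedHom.comp_mk₀, ShiftedHom.mk₀_comp] at h'
  obtain ⟨b, hb₁, hb₂⟩ := complete_distinguished_triangle_morphism₂ _ _
    hS.singleTriangle_distinguished hT.singleTriangle_distinguished
    ((singleFunctor C 0).map a) ((singleFunctor C 0).map c) h'
  obtain ⟨b, rfl⟩ := (singleFunctor C 0).map_surjective b
  refine ⟨⟨a, b, c, ?_, ?_⟩, rfl, rfl⟩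
  · exact (singleFunctor C 0).map_injective (by simpa using! hb₁.symm)
  · exact (singleFunctor C 0).map_injective (by simpa using! hb₂.symm)

end ExtensionClasses

section Diagrams

variable {C : Type u} [Category.{v} C] [Abelian C]

lemma isPullback_of_mono_τ₃ {S T : ShortComplex C} (hS : S.ShortExact) [Mono T.f] (φ : S ⟶ T)
    [Mono φ.τ₃] : IsPullback S.f φ.τ₁ φ.τ₂ T.f := by
  have := hS.mono_f
  refine ⟨⟨φ.comm₁₂.symm⟩, ⟨PullbackCone.IsLimit.mk _ (fun s => hS.exact.lift s.fst ?_)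
    (fun s => hS.exact.lift_f _ _) (fun s => ?_) (fun s m hm _ => ?_)⟩⟩
  · rw [← cancel_mono φ.τ₃, Category.assoc, ← φ.comm₂₃, s.condition_assoc, T.zero, comp_zero,
      zero_comp]
  · rw [← cancel_mono T.f, Category.assoc, φ.comm₁₂, hS.exact.lift_f_assoc, s.condition]
  · rw [← cancel_mono S.f, hm, hS.exact.lift_f]

lemma shortExact_of_isPullback_of_epi {W X Y Z : C} {t : W ⟶ X} {l : W ⟶ Y} {r : X ⟶ Z}
    {b : Y ⟶ Z} (sq : IsPullback t l r b) [Epi r] : sq.shortComplex'.ShortExact where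
  exact := sq.exact_shortComplex'
  mono_f := sq.mono_shortComplex'_f
  epi_g := show Epi (biprod.desc r (-b)) from epi_of_epi_fac (biprod.inl_desc r (-b))

lemma isIso_kernel_map_of_isPushout_of_mono {W X Y Z : C} {t : W ⟶ X} {l : W ⟶ Y} {r : X ⟶ Z}
    {b : Y ⟶ Z} (sq : IsPushout t l r b) [Mono l] : IsIso (kernel.map t b l r sq.w) := by
  have := Abelian.epi_kernel_map_of_isPushout sq
  have : Mono (kernel.map t b l r sq.w) := mono_of_mono_fac (kernel.lift_ι b _ _)
  exact isIso_of_mono_of_epi _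

lemma shortExact_L₃_of_isZero (S : ShortComplex.SnakeInput C) [Epi S.L₂.g]
    (h : IsZero S.L₀.X₃) : S.L₃.ShortExact where
  exact := S.L₃_exact
  mono_f := S.L₂'_exact.mono_g (h.eq_of_src _ _)
  epi_g := inferInstance

/-- The snake diagram of a morphism of short exact sequences; its outer rows are the kernel and the
cokernel computed in `ShortComplex C`. -/
noncomputable def snakeInputOfShortExact {S T : ShortComplex C} (hS : S.ShortExact)
    (hT : T.ShortExact) (φ : S ⟶ T) : ShortComplex.SnakeInput C where
  L₀ := kernel φ
  L₁ := S
  L₂ := T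
  L₃ := cokernel φ
  v₀₁ := kernel.ι φ
  v₁₂ := φ
  v₂₃ := cokernel.π φ
  h₀ := kernelIsKernel φ
  h₃ := cokernelIsCokernel φ
  L₁_exact := hS.exact
  epi_L₁_g := hS.epi_g
  L₂_exact := hT.exact
  mono_L₂_f := hT.mono_f

lemma shortExact_cokernel_of_mono_τ₃ {S T : ShortComplex C} (hS : S.ShortExact)
    (hT : T.ShortExact) (φ : S ⟶ T) [Mono φ.τ₃] : (cokernel φ).ShortExact := by
  have : Epi (snakeInputOfShortExact hS hT φ).L₂.g := hT.epi_g
  exact shortExact_L₃_of_isZero (snakeInputOfShortExact hS hT φ)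
    ((isZero_kernel_of_mono φ.τ₃).of_iso (PreservesKernel.iso ShortComplex.π₃ φ))

lemma shortExact_cokernel_comp {X Y Z : C} (f : X ⟶ Y) (g : Y ⟶ Z) [Mono g] :
    (kernelCokernelCompSequence.snakeInput f g).L₃.ShortExact :=
  have : Epi (kernelCokernelCompSequence.snakeInput f g).L₂.g :=
    inferInstanceAs (Epi (biprod.snd : Y ⊞ Z ⟶ Z))
  shortExact_L₃_of_isZero _ (isZero_kernel_of_mono g)

end Diagrams

section KernelsOfEpis

variable {C : Type u} [Category.{v} C] [Abelian C] {N : Set C}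

/-- The kernels of epimorphisms between objects of `N`, encoded as the objects admitting a
monomorphism into an object of `N` whose cokernel is in `N`. -/
def kernelsOfEpis (N : Set C) : Set C :=
  {K | ∃ (X : C) (i : K ⟶ X), Mono i ∧ X ∈ N ∧ cokernel i ∈ N}

lemma subset_kernelsOfEpis (hcok : ClosedUnderCokernels N) : N ⊆ kernelsOfEpis N :=
  fun X hX => ⟨X, 𝟙 X, inferInstance, hX, hcok _ hX hX⟩

lemma mem_kernelsOfEpis_of_shortExact (hrep : Replete N) {S : ShortComplex C}
    (hS : S.ShortExact) (h₂ : S.X₂ ∈ N) (h₃ : S.X₃ ∈ N) : S.X₁ ∈ kernelsOfEpis N :=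
  ⟨S.X₂, S.f, hS.mono_f, h₂,
    hrep h₃ ((cokernelIsCokernel S.f).coconePointUniqueUpToIso hS.gIsCokernel).symm⟩

lemma replete_kernelsOfEpis (hrep : Replete N) : Replete (kernelsOfEpis N) := by
  rintro K L ⟨X, i, _, hX, hi⟩ e
  exact ⟨X, e.inv ≫ i, inferInstance, hX, hrep hi (cokernelEpiComp e.inv i).symm⟩

lemma cokernel_mem_kernelsOfEpis (hrep : Replete N) (hcok : ClosedUnderCokernels N) {X K : C}
    (g : X ⟶ K) (hX : X ∈ N) (hK : K ∈ kernelsOfEpis N) : cokernel g ∈ kernelsOfEpis N := by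
  obtain ⟨Y, i, _, hY, hi⟩ := hK
  exact mem_kernelsOfEpis_of_shortExact hrep (shortExact_cokernel_comp g i) (hcok _ hX hY) hi

lemma kernelsOfEpis_subset_of_isWide {W : Set C} (hW : IsWide W) (hNW : N ⊆ W) :
    kernelsOfEpis N ⊆ W := by
  rintro K ⟨X, i, _, hX, hi⟩
  obtain ⟨hrep, hker, -, -⟩ := hW
  exact hrep (hker (cokernel.π i) (hNW hX) (hNW hi)) (asIso (Abelian.factorThruImage i)).symm

open ZeroObject in
lemma NarrowSequence.kernelsOfEpis_subset (𝒩 : NarrowSequence C) (k : ℤ) :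
    kernelsOfEpis (𝒩.N k) ⊆ 𝒩.N (k + 1) := by
  rintro K ⟨X, i, _, hX, hi⟩
  have hZ := isZero_zero C
  refine 𝒩.glue (k + 1) (0 : (0 : C) ⟶ 0) (0 : (0 : C) ⟶ K) i (cokernel.π i) comp_zero zero_comp
    (cokernel.condition i) (ShortComplex.exact_of_isZero_X₂ _ hZ)
    ((ShortComplex.exact_iff_mono _ rfl).2 inferInstance) (ShortComplex.exact_cokernel i)
    (𝒩.zero_mem _ _ hZ) (𝒩.zero_mem _ _ hZ) (𝒩.incr k hX) ?_
  rwa [add_sub_cancel_right]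

end KernelsOfEpis

section Hereditary

open Abelian

/-- Right exactness of `Ext¹(S.X₃, -)`, in terms of extensions. -/
lemma Hereditary.exists_shortExact_lift (hher : Hereditary (𝒜 := 𝒜)) {S : ShortComplex 𝒜}
    (hS : S.ShortExact) {X : 𝒜} (p : X ⟶ S.X₁) [Epi p] :
    ∃ (E : 𝒜) (i : X ⟶ E) (q : E ⟶ S.X₃) (w : i ≫ q = 0) (φ : ShortComplex.mk i q w ⟶ S),
      (ShortComplex.mk i q w).ShortExact ∧ φ.τ₁ = p ∧ φ.τ₃ = 𝟙 S.X₃ := by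
  have hp : (ShortComplex.mk (kernel.ι p) p (kernel.condition p)).ShortExact :=
    { exact := ShortComplex.exact_kernel p }
  obtain ⟨e, he⟩ := Ext.covariant_sequence_exact₃ S.X₃ hp hS.extClass rfl (hher _)
  obtain ⟨E, i, q, w, hE, rfl⟩ := exists_shortExact_extClass_eq_s9 e
  obtain ⟨φ, h₁, h₃⟩ := exists_hom_of_extClass_comp_eq_s9 hE hS p (𝟙 _) (by simpa using he)
  exact ⟨E, i, q, w, φ, hE, h₁, h₃⟩

/-- Right exactness of `Ext¹(-, X)`, in terms of extensions. -/
lemma Hereditary.exists_shortExact_extend (hher : Hereditary (𝒜 := 𝒜)) {S : ShortComplex 𝒜}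
    (hS : S.ShortExact) {X Z : 𝒜} (f : S.X₁ ⟶ X) (j : S.X₃ ⟶ Z) [Mono j] :
    ∃ (E : 𝒜) (i : X ⟶ E) (q : E ⟶ Z) (w : i ≫ q = 0) (φ : S ⟶ ShortComplex.mk i q w),
      (ShortComplex.mk i q w).ShortExact ∧ φ.τ₁ = f ∧ φ.τ₃ = j := by
  have hj : (ShortComplex.mk j (cokernel.π j) (cokernel.condition j)).ShortExact :=
    { exact := ShortComplex.exact_cokernel j }
  obtain ⟨e, he⟩ := Ext.contravariant_sequence_exact₁ hj X
    (hS.extClass.comp (Ext.mk₀ f) (add_zero 1)) rfl (hher _)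
  obtain ⟨E, i, q, w, hE, rfl⟩ := exists_shortExact_extClass_eq_s9 e
  obtain ⟨φ, h₁, h₃⟩ := exists_hom_of_extClass_comp_eq_s9 hS hE f j he.symm
  exact ⟨E, i, q, w, φ, hE, h₁, h₃⟩

namespace IsNarrow

variable {N : Set 𝒜}

/-- If `E` is a lift to `X` of the extension `Y` of `coker f` by `coim f`, then `E ⊞ coim f` is an
extension of `Y` by `X`, and `coim f` is the cokernel of the inclusion of `E`. -/
lemma coimage_mem (hN : IsNarrow N) (hher : Hereditary (𝒜 := 𝒜)) {X Y : 𝒜} (f : X ⟶ Y)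
    (hX : X ∈ N) (hY : Y ∈ N) : Abelian.coimage f ∈ N := by
  obtain ⟨hrep, hext, hcok⟩ := hN
  let j := Abelian.factorThruCoimage f
  have hS : (ShortComplex.mk j (cokernel.π j) (cokernel.condition j)).ShortExact :=
    { exact := ShortComplex.exact_cokernel j }
  have hj : cokernel j ∈ N := hrep (hcok f hX hY)
    (cokernelIsoOfEq (Abelian.coimage.fac f).symm ≪≫ cokernelEpiComp _ _)
  obtain ⟨E, i, q, w, φ, hT, h₁, h₃⟩ := hher.exists_shortExact_lift hS (Abelian.coimage.π f)
  have hE : E ∈ N := hext _ hT hX hj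
  have : IsIso φ.τ₃ := by rw [h₃]; infer_instance
  have : Epi φ.τ₁ := by rw [h₁]; infer_instance
  have := hT.epi_g
  have : Epi φ.τ₂ := ShortComplex.epi_τ₂_of_exact_of_epi φ hS.exact
  have hsum : (E ⊞ Abelian.coimage f : 𝒜) ∈ N :=
    hext _ (shortExact_of_isPullback_of_epi (isPullback_of_mono_τ₃ hT φ)) hX hY
  exact hrep (hcok (biprod.inl : E ⟶ E ⊞ Abelian.coimage f) hE hsum) cokernelBiprodInlIso

lemma kernel_mem_kernelsOfEpis (hN : IsNarrow N) (hher : Hereditary (𝒜 := 𝒜)) {X K : 𝒜}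
    (g : X ⟶ K) (hX : X ∈ N) (hK : K ∈ kernelsOfEpis N) : kernel g ∈ kernelsOfEpis N := by
  obtain ⟨Y, i, _, hY, -⟩ := hK
  have hgi : kernel (g ≫ i) ∈ kernelsOfEpis N :=
    ⟨X, kernel.ι (g ≫ i), inferInstance, hX, hN.coimage_mem hher (g ≫ i) hX hY⟩
  exact replete_kernelsOfEpis hN.1 hgi (kernelCompMono g i)

lemma closedUnderExtensions_kernelsOfEpis (hN : IsNarrow N) (hher : Hereditary (𝒜 := 𝒜)) :
    ClosedUnderExtensions (kernelsOfEpis N) := by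
  obtain ⟨hrep, hext, -⟩ := hN
  rintro S hS ⟨X₁, i₁, _, hX₁, hi₁⟩ ⟨X₃, i₃, _, hX₃, hi₃⟩
  obtain ⟨E, i, q, w, φ, hT, rfl, rfl⟩ := hher.exists_shortExact_extend hS i₁ i₃
  have := hS.mono_f
  have := hT.mono_f
  have hmono : Mono φ.τ₂ := ShortComplex.mono_τ₂_of_exact_of_mono φ hS.exact
  have hcok : (cokernel φ).X₂ ∈ N := hext _ (shortExact_cokernel_of_mono_τ₃ hS hT φ)
    (hrep hi₁ (PreservesCokernel.iso ShortComplex.π₁ φ).symm)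
    (hrep hi₃ (PreservesCokernel.iso ShortComplex.π₃ φ).symm)
  exact ⟨E, φ.τ₂, hmono, hext _ hT hX₁ hX₃, hrep hcok (PreservesCokernel.iso ShortComplex.π₂ φ)⟩

lemma pushout_mem_kernelsOfEpis (hN : IsNarrow N) (hher : Hereditary (𝒜 := 𝒜)) {K L X : 𝒜}
    (f : K ⟶ L) (i : K ⟶ X) [Mono i] (hL : L ∈ kernelsOfEpis N) (hi : cokernel i ∈ N) :
    pushout f i ∈ kernelsOfEpis N := by
  let inl : L ⟶ pushout f i := pushout.inl f i
  have hS : (ShortComplex.mk inl (cokernel.π inl) (cokernel.condition inl)).ShortExact :=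
    { exact := ShortComplex.exact_cokernel inl }
  have := isIso_cokernel_map_of_isPushout (IsPushout.of_hasPushout f i).flip
  have hinl : cokernel inl ∈ N :=
    hN.1 hi (asIso (cokernel.map i inl f (pushout.inr f i) pushout.condition.symm))
  exact hN.closedUnderExtensions_kernelsOfEpis hher _ hS hL (subset_kernelsOfEpis hN.2.2 hinl)

lemma isWide_kernelsOfEpis (hN : IsNarrow N) (hher : Hereditary (𝒜 := 𝒜)) :
    IsWide (kernelsOfEpis N) := by
  have hrep := replete_kernelsOfEpis hN.1
  refine ⟨hrep, ?_, ?_, hN.closedUnderExtensions_kernelsOfEpis hher⟩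
  all_goals
    rintro K L f ⟨X, i, _, hX, hi⟩ hL
    have hP := hN.pushout_mem_kernelsOfEpis hher f i hL hi
  · have := isIso_kernel_map_of_isPushout_of_mono (IsPushout.of_hasPushout f i)
    exact hrep (hN.kernel_mem_kernelsOfEpis hher (pushout.inr f i) hX hP)
      (asIso (kernel.map f (pushout.inr f i) i (pushout.inl f i) pushout.condition)).symm
  · have := isIso_cokernel_map_of_isPushout (IsPushout.of_hasPushout f i)
    exact hrep (cokernel_mem_kernelsOfEpis hN.1 hN.2.2 (pushout.inr f i) hX hP)
      (asIso (cokernel.map f (pushout.inr f i) i (pushout.inl f i) pushout.condition)).symm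

lemma wideClosure_eq_kernelsOfEpis (hN : IsNarrow N) (hher : Hereditary (𝒜 := 𝒜)) :
    wideClosure N = kernelsOfEpis N :=
  Set.Subset.antisymm
    (fun _ hX => hX _ (hN.isWide_kernelsOfEpis hher) (subset_kernelsOfEpis hN.2.2))
    (fun _ hX _ hW hNW => kernelsOfEpis_subset_of_isWide hW hNW hX)

end IsNarrow

end Hereditary

theorem wideClosure_subset_next_of_narrowSequence
    (hher : Hereditary (𝒜 := 𝒜)) (𝒩 : NarrowSequence 𝒜) (k : ℤ) :
    wideClosure (𝒩.N k) ⊆ 𝒩.N (k + 1) := by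
  have hN : IsNarrow (𝒩.N k) := ⟨𝒩.replete k, 𝒩.ext_closed k, 𝒩.coker_closed k⟩
  rw [hN.wideClosure_eq_kernelsOfEpis hher]
  exact 𝒩.kernelsOfEpis_subset k
end
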